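/- For every integer r ≥ 0 and every ρ ∈ (0, 1] there exists a constant C > 0, depending only on r and ρ, such that for every triangle K ⊂ ℝ² with diameter h whose inradius is at least ρh, every subset S ⊂ K with one-dimensional Hausdorff measure μH¹(S) ≤ h, and every polynomial p of degree at most r on ℝ², one has ∫_S p² dμH¹ ≤ C h^{−1} ∫_K p² dx. -/

import Mathlib

open MeasureTheory Set
open scoped RealInnerProductSpace

noncomputable section

/-- Points of the plane. -/
abbrev Pt2 := EuclideanSpace ℝ (Fin 2)

lemma dti_subst_degree (r : ℕ) (p : MvPolynomial (Fin 2) ℝ) (hp : p.totalDegree ≤ r)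
    (g : Fin 2 → MvPolynomial (Fin 2) ℝ) (hg : ∀ j, (g j).totalDegree ≤ 1) :
    (MvPolynomial.bind₁ g p).totalDegree ≤ r := by
  rw [MvPolynomial.bind₁, MvPolynomial.aeval_def, MvPolynomial.eval₂_eq']
  apply MvPolynomial.totalDegree_finsetSum_le
  intro m hm
  refine (MvPolynomial.totalDegree_mul _ _).trans ?_
  rw [MvPolynomial.algebraMap_eq, MvPolynomial.totalDegree_C, zero_add]
  refine (MvPolynomial.totalDegree_finsetProd _ _).trans ?_
  refine le_trans ?_ ((MvPolynomial.le_totalDegree hm).trans hp)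
  rw [Finsupp.sum_fintype _ _ (by simp)]
  apply Finset.sum_le_sum
  intro j _
  refine (MvPolynomial.totalDegree_pow _ _).trans ?_
  calc m j * (g j).totalDegree ≤ m j * 1 := Nat.mul_le_mul_left _ (hg j)
    _ = m j := mul_one _

/-- exponent box -/
def dtiT (r : ℕ) : Finset (Fin 2 →₀ ℕ) := Finset.Iic (Finsupp.equivFunOnFinite.symm fun _ => r)

/-- polynomial with given coefficients -/
def dtiQ (r : ℕ) (c : dtiT r → ℝ) : MvPolynomial (Fin 2) ℝ :=
  ∑ m, MvPolynomial.monomial m.1 (c m)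

lemma dtiQ_coeff (r : ℕ) (c : dtiT r → ℝ) (m : dtiT r) : (dtiQ r c).coeff m.1 = c m := by
  classical
  simp [dtiQ, MvPolynomial.coeff_sum, MvPolynomial.coeff_monomial, Subtype.coe_inj]

lemma dtiQ_eval (r : ℕ) (c : dtiT r → ℝ) (x : Fin 2 → ℝ) :
    MvPolynomial.eval x (dtiQ r c) = ∑ m, c m * ∏ j, x j ^ (m.1 j) := by
  simp [dtiQ, MvPolynomial.eval_monomial, Finsupp.prod_fintype]

lemma dtiQ_surj (r : ℕ) (q : MvPolynomial (Fin 2) ℝ) (hq : q.totalDegree ≤ r) :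
    q = dtiQ r (fun m => q.coeff m.1) := by
  classical
  ext m
  by_cases hm : m ∈ dtiT r
  · exact (dtiQ_coeff r (fun m => q.coeff m.1) ⟨m, hm⟩).symm
  · have h1 : q.coeff m = 0 := by
      by_contra hne
      apply hm
      rw [dtiT, Finset.mem_Iic]
      intro j
      have := MvPolynomial.le_totalDegree (MvPolynomial.mem_support_iff.2 hne)
      rw [Finsupp.sum_fintype _ _ (by simp)] at this
      have h2 : m j ≤ ∑ i, m i := Finset.single_le_sum (f := fun i => m i) (by simp) (Finset.mem_univ j)
      simp only [Finsupp.equivFunOnFinite_symm_apply_apply]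
      omega
    rw [h1, dtiQ, MvPolynomial.coeff_sum]
    symm
    apply Finset.sum_eq_zero
    intro i _
    rw [MvPolynomial.coeff_monomial, if_neg]
    rintro rfl
    exact hm i.2

lemma dtiQ_cont (r : ℕ) :
    Continuous (fun z : (dtiT r → ℝ) × Pt2 => MvPolynomial.eval (fun j => z.2 j) (dtiQ r z.1)) := by
  simp only [dtiQ_eval]
  fun_prop

lemma dti_cont (p : MvPolynomial (Fin 2) ℝ) :
    Continuous (fun x : Pt2 => MvPolynomial.eval (fun j => x j) p) :=
  p.continuous_eval.comp (by fun_prop)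

lemma dti_pos (δ : ℝ) (hδ : 0 < δ) (q : MvPolynomial (Fin 2) ℝ) (hq : q ≠ 0) :
    0 < ∫ x in Metric.closedBall (0 : Pt2) δ, (MvPolynomial.eval (fun j => x j) q) ^ 2 := by
  have hc : Continuous (fun x : Pt2 => (MvPolynomial.eval (fun j => x j) q) ^ 2) := (dti_cont q).pow 2
  rw [setIntegral_pos_iff_support_of_nonneg_ae (Filter.Eventually.of_forall fun x => sq_nonneg _)
    (hc.continuousOn.integrableOn_compact (isCompact_closedBall _ _))]
  have hex : ∃ x ∈ Metric.ball (0 : Pt2) δ, MvPolynomial.eval (fun j => x j) q ≠ 0 := by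
    by_contra hcon
    push Not at hcon
    apply hq
    refine MvPolynomial.funext_set (fun _ => Ioo 0 (δ/2)) (fun _ => Ioo_infinite (by positivity)) ?_
    intro y hy
    have := hcon (WithLp.toLp 2 y) ?_
    · simpa using this
    · rw [mem_ball_zero_iff, EuclideanSpace.norm_eq, Real.sqrt_lt' hδ]
      have h0 := hy 0 (mem_univ _)
      have h1 := hy 1 (mem_univ _)
      simp only [mem_Ioo] at h0 h1
      simp only [Fin.sum_univ_two, Real.norm_eq_abs, sq_abs]
      nlinarith
  obtain ⟨x, hx, hne⟩ := hex
  refine lt_of_lt_of_le (IsOpen.measure_pos volume (U := Function.support (fun x : Pt2 => (MvPolynomial.eval (fun j => x j) q) ^ 2) ∩ Metric.ball 0 δ)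
    ((hc.isOpen_support).inter Metric.isOpen_ball) ⟨x, by simpa using hne, hx⟩)
    (measure_mono (inter_subset_inter_right _ Metric.ball_subset_closedBall))

lemma dti_ref (r : ℕ) (δ : ℝ) (hδ : 0 < δ) : ∃ C : ℝ, 0 < C ∧ ∀ q : MvPolynomial (Fin 2) ℝ,
    q.totalDegree ≤ r → ∀ y ∈ Metric.closedBall (0 : Pt2) 1,
      (MvPolynomial.eval (fun j => y j) q) ^ 2 ≤
        C * ∫ x in Metric.closedBall (0 : Pt2) δ, (MvPolynomial.eval (fun j => x j) q) ^ 2 := by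
  let F : (dtiT r → ℝ) → ℝ := fun c =>
    ∫ x in Metric.closedBall (0 : Pt2) δ, (MvPolynomial.eval (fun j => x j) (dtiQ r c)) ^ 2
  have hF : Continuous F :=
    continuous_parametric_integral_of_continuous ((dtiQ_cont r).pow 2) (isCompact_closedBall _ _)
  have hT : (0 : Fin 2 →₀ ℕ) ∈ dtiT r := by simp [dtiT]
  haveI : Nonempty (dtiT r) := ⟨⟨0, hT⟩⟩
  obtain ⟨c₀, hc₀, hmin⟩ := (isCompact_sphere (0 : dtiT r → ℝ) 1).exists_isMinOn
    (NormedSpace.sphere_nonempty.2 zero_le_one) hF.continuousOn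
  have hm : 0 < F c₀ := by
    apply dti_pos δ hδ
    intro h0
    have : c₀ = 0 := by
      ext m
      rw [← dtiQ_coeff r c₀ m, h0]; simp
    rw [this] at hc₀
    simp at hc₀
  have hsm : ∀ (a : ℝ) (c : dtiT r → ℝ) (x : Fin 2 → ℝ),
      MvPolynomial.eval x (dtiQ r (a • c)) = a * MvPolynomial.eval x (dtiQ r c) := by
    intro a c x
    simp [dtiQ_eval, Finset.mul_sum, mul_assoc]
  have hlow : ∀ c, F c₀ * ‖c‖ ^ 2 ≤ F c := by
    intro c
    by_cases hc : c = 0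
    · subst hc
      simp only [norm_zero]
      have : 0 ≤ F 0 := integral_nonneg fun x => sq_nonneg _
      simpa using this
    · have hn : 0 < ‖c‖ := norm_pos_iff.2 hc
      have h1 : F c₀ ≤ F (‖c‖⁻¹ • c) := hmin (by simp [norm_smul, hn.ne'])
      have h2 : F (‖c‖⁻¹ • c) = (‖c‖⁻¹) ^ 2 * F c := by
        simp only [F, hsm, mul_pow]
        rw [integral_const_mul]
      rw [h2] at h1
      calc F c₀ * ‖c‖ ^ 2 ≤ ((‖c‖⁻¹) ^ 2 * F c) * ‖c‖ ^ 2 := by gcongr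
        _ = F c := by field_simp
  let N : ℝ := Fintype.card (dtiT r)
  have hN : 0 < N := by simp only [N]; exact_mod_cast Fintype.card_pos
  refine ⟨N ^ 2 / F c₀, by positivity, ?_⟩
  intro q hq y hy
  rw [dtiQ_surj r q hq]
  set c : dtiT r → ℝ := fun m => q.coeff m.1
  have hy' : ∀ j, |y j| ≤ 1 := by
    intro j
    have := PiLp.norm_apply_le y j
    rw [mem_closedBall_zero_iff] at hy
    rw [Real.norm_eq_abs] at this
    linarith
  have hb : |MvPolynomial.eval (fun j => y j) (dtiQ r c)| ≤ N * ‖c‖ := by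
    rw [dtiQ_eval]
    refine (Finset.abs_sum_le_sum_abs _ _).trans ?_
    calc _ ≤ ∑ m : dtiT r, ‖c‖ := by
          apply Finset.sum_le_sum
          intro m _
          rw [abs_mul, Finset.abs_prod]
          have h1 : |c m| ≤ ‖c‖ := norm_le_pi_norm c m
          have h2 : ∏ j, |y j ^ (m.1 j)| ≤ 1 := by
            apply Finset.prod_le_one (fun _ _ => abs_nonneg _)
            intro j _
            rw [abs_pow]
            exact pow_le_one₀ (abs_nonneg _) (hy' j)
          calc _ ≤ ‖c‖ * 1 := by gcongr
            _ = ‖c‖ := mul_one _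
      _ = N * ‖c‖ := by simp [N]
  calc _ = |MvPolynomial.eval (fun j => y j) (dtiQ r c)| ^ 2 := (sq_abs _).symm
    _ ≤ (N * ‖c‖) ^ 2 := by gcongr
    _ = N ^ 2 / F c₀ * (F c₀ * ‖c‖ ^ 2) := by field_simp
    _ ≤ N ^ 2 / F c₀ * F c := by gcongr; exact hlow c

open scoped Pointwise in
lemma dti_scale (f : Pt2 → ℝ) (z : Pt2) (h δ : ℝ) (hh : 0 < h) :
    ∫ y in Metric.closedBall (0 : Pt2) δ, f (z + h • y) =
      (h ^ 2)⁻¹ * ∫ x in Metric.closedBall z (δ * h), f x := by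
  rw [Measure.setIntegral_comp_smul_of_pos volume (fun x => f (z + x)) _ hh]
  have e : h • Metric.closedBall (0 : Pt2) δ = (fun x => z + x) ⁻¹' Metric.closedBall z (δ * h) := by
    rw [smul_closedBall' hh.ne']
    ext x
    simp [abs_of_pos hh, mul_comm]
  rw [e, (measurePreserving_add_left volume z).setIntegral_preimage_emb
    (measurableEmbedding_addLeft z)]
  simp

/-- **Discrete trace inequality on cut triangles** (second estimate of Lemma 3.1).
For every degree `r` and shape-regularity parameter `ρ ∈ (0,1]` there is a constant
`C > 0`, depending only on `r` and `ρ`, such that for every triangle `K ⊆ ℝ²` of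
diameter `h` with inradius at least `ρ h`, every subset `S ⊆ K` of one-dimensional
Hausdorff measure at most `h`, and every polynomial `p` of degree at most `r`,
`∫_S p² dμH¹ ≤ C h⁻¹ ∫_K p² dx`. -/
theorem discrete_trace_inequality_on_cut_triangles
    (r : ℕ) (ρ : ℝ) (hρ0 : 0 < ρ) (hρ1 : ρ ≤ 1) :
    ∃ C : ℝ, 0 < C ∧
      ∀ (K : Set Pt2) (vtx : Fin 3 → Pt2) (h : ℝ),
        AffineIndependent ℝ vtx → K = convexHull ℝ (Set.range vtx) →
        h = Metric.diam K →
        (∃ z : Pt2, Metric.ball z (ρ * h) ⊆ K) →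
        ∀ S : Set Pt2, S ⊆ K →
          Measure.hausdorffMeasure (1 : ℝ) S ≤ ENNReal.ofReal h →
        ∀ p : MvPolynomial (Fin 2) ℝ, p.totalDegree ≤ r →
          (∫ x in S, (MvPolynomial.eval (fun j => x j) p) ^ 2
              ∂(Measure.hausdorffMeasure (1 : ℝ)))
            ≤ C * h⁻¹ * ∫ x in K, (MvPolynomial.eval (fun j => x j) p) ^ 2 := by
  obtain ⟨C, hC, hCb⟩ := dti_ref r (ρ / 2) (by positivity)
  refine ⟨C, hC, ?_⟩
  intro K vtx h _ hK hh ⟨z, hz⟩ S hS hSm p hp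
  have hKc : IsCompact K := by
    rw [hK]; exact (finite_range vtx).isCompact_convexHull _
  have hh0 : 0 ≤ h := hh ▸ Metric.diam_nonneg
  rcases hh0.eq_or_lt with h0 | hpos
  · have : Measure.hausdorffMeasure (1 : ℝ) S = 0 := by
      rw [← h0] at hSm; simpa using hSm
    rw [Measure.restrict_eq_zero.2 this, ← h0]
    simp
  have hsub : Metric.closedBall z (ρ / 2 * h) ⊆ K :=
    (Metric.closedBall_subset_ball (by nlinarith [mul_pos hρ0 hpos])).trans hz
  have hzK : z ∈ K := hsub (Metric.mem_closedBall_self (by positivity))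
  have hc : Continuous (fun x : Pt2 => (MvPolynomial.eval (fun j => x j) p) ^ 2) :=
    (dti_cont p).pow 2
  set I : ℝ := ∫ x in K, (MvPolynomial.eval (fun j => x j) p) ^ 2 with hI
  have hI1 : ∫ x in Metric.closedBall z (ρ / 2 * h), (MvPolynomial.eval (fun j => x j) p) ^ 2 ≤ I :=
    setIntegral_mono_set (hc.continuousOn.integrableOn_compact hKc)
      (Filter.Eventually.of_forall fun x => sq_nonneg _) hsub.eventuallyLE
  let g : Fin 2 → MvPolynomial (Fin 2) ℝ :=
    fun j => MvPolynomial.C (z j) + h • MvPolynomial.X j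
  have hg : ∀ j, (g j).totalDegree ≤ 1 := by
    intro j
    refine (MvPolynomial.totalDegree_add _ _).trans (max_le (by simp) ?_)
    exact (MvPolynomial.totalDegree_smul_le _ _).trans (by simp)
  have hev : ∀ y : Pt2, MvPolynomial.eval (fun j => y j) (MvPolynomial.bind₁ g p) =
      MvPolynomial.eval (fun j => (z + h • y) j) p := by
    intro y
    rw [MvPolynomial.eval, MvPolynomial.eval₂Hom_bind₁]
    congr 2
    ext j
    simp [g, MvPolynomial.smul_eval]
  have key : ∀ x ∈ K, (MvPolynomial.eval (fun j => x j) p) ^ 2 ≤ C * ((h ^ 2)⁻¹ * I) := by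
    intro x hx
    have h1 := hCb _ (dti_subst_degree r p hp g hg) (h⁻¹ • (x - z)) (by
      rw [mem_closedBall_zero_iff, norm_smul, norm_inv, Real.norm_of_nonneg hh0,
        inv_mul_le_iff₀ hpos, mul_one, ← dist_eq_norm, hh]
      exact Metric.dist_le_diam_of_mem hKc.isBounded hx hzK)
    simp only [hev] at h1
    rw [dti_scale (fun x => (MvPolynomial.eval (fun j => x j) p) ^ 2) z h (ρ / 2) hpos,
      smul_inv_smul₀ hpos.ne', add_sub_cancel] at h1
    refine h1.trans ?_
    gcongr
  have hfin : Measure.hausdorffMeasure (1 : ℝ) S < ⊤ := hSm.trans_lt ENNReal.ofReal_lt_top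
  have hI0 : 0 ≤ I := integral_nonneg fun x => sq_nonneg _
  have h2 := norm_setIntegral_le_of_norm_le_const (μ := Measure.hausdorffMeasure (1 : ℝ))
    (f := fun x : Pt2 => (MvPolynomial.eval (fun j => x j) p) ^ 2) (C := C * ((h ^ 2)⁻¹ * I)) hfin
    (fun x hx => by
      rw [Real.norm_of_nonneg (sq_nonneg _)]
      exact key x (hS hx))
  refine (le_abs_self _).trans (h2.trans ?_)
  have h3 : (Measure.hausdorffMeasure (1 : ℝ)).real S ≤ h :=
    ENNReal.toReal_le_of_le_ofReal hh0 hSm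
  calc _ ≤ C * ((h ^ 2)⁻¹ * I) * h := by gcongr
    _ = C * h⁻¹ * I := by field_simp

end
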